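/- Let g : ℝⁿ → ℝ be a real trigonometric polynomial of degree ≤ 2r (1-periodic in each coordinate). Then for every integer s with s² > 6r² there exist a real number c and finitely many real trigonometric polynomials h₁, …, h_K of degree ≤ s such that g(x) − c = Σ_{k=1}^{K} h_k(x)² for all x ∈ ℝⁿ and (min_{x ∈ [0,1]ⁿ} g(x)) − c ≤ ‖g − ḡ‖_F · [(1 − 6r²/s²)^{−n} − 1]. -/

import Mathlib

open MeasureTheory

/-- `trigChar k z = exp(2πi⟨k, z⟩)`, the complex exponential with frequency `k ∈ ℤᵐ`. -/
noncomputable def trigChar {m : ℕ} (k : Fin m → ℤ) (z : Fin m → ℝ) : ℂ :=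
  Complex.exp (2 * (Real.pi : ℂ) * Complex.I * ∑ i, (k i : ℂ) * (z i : ℂ))

/-- `t : ℝᵐ → ℝ` is a real trigonometric polynomial of degree `≤ s`: a finite combination
`t(z) = Σ_{k ∈ ℤᵐ, ‖k‖_∞ ≤ s} c_k exp(2πi⟨k, z⟩)` that is real-valued (hence 1-periodic in
each coordinate). -/
def IsTrigPoly {m : ℕ} (s : ℕ) (t : (Fin m → ℝ) → ℝ) : Prop :=
  ∃ (S : Finset (Fin m → ℤ)) (c : (Fin m → ℤ) → ℂ),
    (∀ k ∈ S, ∀ i, |k i| ≤ (s : ℤ)) ∧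
    ∀ z, (t z : ℂ) = ∑ k ∈ S, c k * trigChar k z

/-- `fCoeff g k` is the `k`-th Fourier coefficient of the 1-periodic function `g : ℝᵐ → ℝ`. -/
noncomputable def fCoeff {m : ℕ} (g : (Fin m → ℝ) → ℝ) (k : Fin m → ℤ) : ℂ :=
  ∫ z in Set.Icc (0 : Fin m → ℝ) 1, (g z : ℂ) * trigChar (-k) z

/-- `Fnorm g = Σ_k |ĝ(k)|`, the ℓ¹ norm of the Fourier coefficients of `g`. -/
noncomputable def Fnorm {m : ℕ} (g : (Fin m → ℝ) → ℝ) : ℝ :=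
  ∑' k : Fin m → ℤ, ‖fCoeff g k‖

/-!
If squares `q_j²` of trigonometric polynomials and nodes `y_j` are such that the positive operator
`u ↦ Σ_j u(y_j) q_j(x)²` multiplies each character of degree `≤ d` by a nonzero scalar, then a
polynomial `g` of degree `≤ d` is the image of some `u`, and `g - c` is a sum of squares as soon
as `u ≥ c` at the nodes. With the operator normalized to fix constants, `u - g` is bounded by the
`ℓ¹` norm of the nonconstant part of `ĝ` times the distance of the inverse eigenvalues from `1`.

Such squares are the translates, by the points of a grid fine enough to avoid aliasing, of the
square of the kernel with Fourier coefficients `∏ i, w (a i)`. The eigenvalues are then products of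
autocorrelations of the weights `w`. For the tent `w a = max (s - |a|) 0`, the autocorrelation drops
by at most `s k²` at lag `k`, against a value `(2 s³ + s) / 3` at lag `0`, so each normalized factor
is at least `1 - 3 k² / (2 s²)`. The case `d = 2 r` gives the constant `6 r² / s²`.
-/
open scoped ComplexConjugate

section Characters

variable {m : ℕ} (k l : Fin m → ℤ) (x y z : Fin m → ℝ)

theorem trigChar_eq_mFourier :
    trigChar k z = UnitAddTorus.mFourier k fun i => (z i : UnitAddCircle) := by
  simp [trigChar, UnitAddTorus.mFourier, fourier_coe_apply, Finset.mul_sum, Complex.exp_sum,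
    mul_assoc, -fourier_apply]

theorem trigChar_zero : trigChar 0 z = 1 := by
  simp [trigChar]

theorem trigChar_add : trigChar (k + l) z = trigChar k z * trigChar l z := by
  simp only [trigChar_eq_mFourier, UnitAddTorus.mFourier_add]

theorem trigChar_neg : trigChar (-k) z = conj (trigChar k z) := by
  simp only [trigChar_eq_mFourier, UnitAddTorus.mFourier_neg]

theorem trigChar_sub_right : trigChar k (x - y) = trigChar k x * trigChar (-k) y := by
  simp [trigChar, ← Complex.exp_add, mul_sub, ← sub_eq_add_neg]

theorem norm_trigChar : ‖trigChar k z‖ = 1 := by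
  simp only [trigChar_eq_mFourier, UnitAddTorus.mFourier, ContinuousMap.coe_mk, norm_prod,
    fourier_apply, Circle.norm_coe, Finset.prod_const_one]

theorem continuous_trigChar : Continuous (trigChar k) := by
  unfold trigChar
  fun_prop

theorem mFourierCoeff_mFourier {ι : Type*} [Fintype ι] (k l : ι → ℤ) :
    UnitAddTorus.mFourierCoeff (UnitAddTorus.mFourier k) l = if l = k then 1 else 0 := by
  rw [← UnitAddTorus.mFourierCoeff_toLp, ← UnitAddTorus.mFourierBasis_repr,
    HilbertBasis.repr_apply_apply, UnitAddTorus.coe_mFourierBasis]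
  exact orthonormal_iff_ite.1 UnitAddTorus.orthonormal_mFourier l k

theorem setIntegral_trigChar :
    ∫ z in Set.Icc (0 : Fin m → ℝ) 1, trigChar k z = if k = 0 then 1 else 0 := by
  have hIoc : {z : Fin m → ℝ | ∀ i, z i ∈ Set.Ioc 0 1} =ᵐ[volume] Set.Icc 0 1 := by
    have hpi : {z : Fin m → ℝ | ∀ i, z i ∈ Set.Ioc 0 1} =
        Set.univ.pi fun i => Set.Ioc ((0 : Fin m → ℝ) i) ((1 : Fin m → ℝ) i) := by
      ext z
      simp
    rw [hpi]
    exact Measure.univ_pi_Ioc_ae_eq_Icc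
  have hcoeff := UnitAddTorus.mFourierCoeff_eq_integral (UnitAddTorus.mFourier k) 0 0
  simp only [mFourierCoeff_mFourier, neg_zero, UnitAddTorus.mFourier_zero,
    ContinuousMap.one_apply, one_smul, Pi.zero_apply, zero_add, ← trigChar_eq_mFourier,
    setIntegral_congr_set hIoc, eq_comm (a := (0 : Fin m → ℤ))] at hcoeff
  exact hcoeff.symm

end Characters

/-- The frequencies `k ∈ ℤᵐ` with `‖k‖_∞ ≤ d`. -/
noncomputable def freqBox (m d : ℕ) : Finset (Fin m → ℤ) :=
  Fintype.piFinset fun _ => Finset.Icc (-(d : ℤ)) d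

theorem mem_freqBox {m d : ℕ} {k : Fin m → ℤ} : k ∈ freqBox m d ↔ ∀ i, |k i| ≤ (d : ℤ) := by
  simp only [freqBox, Fintype.mem_piFinset, Finset.mem_Icc, abs_le]

theorem zero_mem_freqBox (m d : ℕ) : 0 ∈ freqBox m d := by
  simp [mem_freqBox]

theorem neg_mem_freqBox {m d : ℕ} {k : Fin m → ℤ} : -k ∈ freqBox m d ↔ k ∈ freqBox m d := by
  simp [mem_freqBox]

theorem fCoeff_of_eq_sum {m : ℕ} {g : (Fin m → ℝ) → ℝ} {S : Finset (Fin m → ℤ)}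
    {c : (Fin m → ℤ) → ℂ} (hg : ∀ z, (g z : ℂ) = ∑ k ∈ S, c k * trigChar k z)
    (l : Fin m → ℤ) : fCoeff g l = if l ∈ S then c l else 0 := by
  have hint (k : Fin m → ℤ) :
      IntegrableOn (fun z => c k * trigChar (k + -l) z) (Set.Icc (0 : Fin m → ℝ) 1) :=
    ((continuous_trigChar _).const_mul _).continuousOn.integrableOn_compact isCompact_Icc
  simp only [fCoeff, hg, Finset.sum_mul, mul_assoc, ← trigChar_add]
  rw [integral_finsetSum _ fun k _ => hint k]
  simp [integral_const_mul, setIntegral_trigChar, add_neg_eq_zero]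

theorem fCoeff_sub_const {m : ℕ} {g : (Fin m → ℝ) → ℝ} (hg : Continuous g) (b : ℝ)
    {k : Fin m → ℤ} (hk : k ≠ 0) : fCoeff (fun x => g x - b) k = fCoeff g k := by
  have hint {f : (Fin m → ℝ) → ℂ} (hf : Continuous f) :
      IntegrableOn (fun z => f z * trigChar (-k) z) (Set.Icc (0 : Fin m → ℝ) 1) :=
    (hf.mul (continuous_trigChar _)).continuousOn.integrableOn_compact isCompact_Icc
  simp only [fCoeff, Complex.ofReal_sub, sub_mul]
  rw [integral_sub (hint (f := fun z => g z) (by fun_prop)) (hint continuous_const),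
    integral_const_mul, setIntegral_trigChar, if_neg (neg_ne_zero.2 hk), mul_zero, sub_zero]

namespace IsTrigPoly

variable {m s : ℕ} {t : (Fin m → ℝ) → ℝ}

theorem const_mul (ht : IsTrigPoly s t) (C : ℝ) : IsTrigPoly s fun x => C * t x := by
  obtain ⟨S, c, hS, htc⟩ := ht
  refine ⟨S, fun k => C * c k, hS, fun z => ?_⟩
  simp only [Complex.ofReal_mul, htc, Finset.mul_sum, mul_assoc]

theorem comp_sub_right (ht : IsTrigPoly s t) (y : Fin m → ℝ) :
    IsTrigPoly s fun x => t (x - y) := by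
  obtain ⟨S, c, hS, htc⟩ := ht
  refine ⟨S, fun k => c k * trigChar (-k) y, hS, fun z => ?_⟩
  simp only [htc, trigChar_sub_right, mul_assoc, mul_comm (trigChar (-_) y)]

theorem continuous (ht : IsTrigPoly s t) : Continuous t := by
  obtain ⟨S, c, -, htc⟩ := ht
  have hre : t = fun z => (∑ k ∈ S, c k * trigChar k z).re := by
    ext z
    rw [← htc, Complex.ofReal_re]
  rw [hre]
  exact Complex.continuous_re.comp
    (continuous_finsetSum _ fun k _ => (continuous_trigChar k).const_mul _)

theorem fCoeff_eq_zero (ht : IsTrigPoly s t) {k : Fin m → ℤ} (hk : k ∉ freqBox m s) :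
    fCoeff t k = 0 := by
  obtain ⟨S, c, hS, htc⟩ := ht
  rw [fCoeff_of_eq_sum htc, if_neg fun hkS => hk (mem_freqBox.2 (hS k hkS))]

theorem eq_sum_fCoeff (ht : IsTrigPoly s t) (z : Fin m → ℝ) :
    (t z : ℂ) = ∑ k ∈ freqBox m s, fCoeff t k * trigChar k z := by
  obtain ⟨S, c, hS, htc⟩ := ht
  have hsub : S ⊆ freqBox m s := fun k hk => mem_freqBox.2 (hS k hk)
  simp only [fCoeff_of_eq_sum htc, ite_mul, zero_mul]
  rw [Finset.sum_ite_mem, Finset.inter_eq_right.2 hsub, htc]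

theorem sum_norm_fCoeff_le_Fnorm (ht : IsTrigPoly s t) (b : ℝ) :
    ∑ k ∈ (freqBox m s).erase 0, ‖fCoeff t k‖ ≤ Fnorm fun x => t x - b := by
  have hsub {k : Fin m → ℤ} (hk : k ≠ 0) : fCoeff (fun x => t x - b) k = fCoeff t k :=
    fCoeff_sub_const ht.continuous b hk
  have hsum : Summable fun k => ‖fCoeff (fun x => t x - b) k‖ := by
    refine summable_of_ne_finset_zero (s := freqBox m s) fun k hk => ?_
    have hk0 : k ≠ 0 := fun h => hk (h ▸ zero_mem_freqBox m s)
    rw [hsub hk0, ht.fCoeff_eq_zero hk, norm_zero]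
  calc ∑ k ∈ (freqBox m s).erase 0, ‖fCoeff t k‖
      = ∑ k ∈ (freqBox m s).erase 0, ‖fCoeff (fun x => t x - b) k‖ :=
        Finset.sum_congr rfl fun k hk => by rw [hsub (Finset.ne_of_mem_erase hk)]
    _ ≤ Fnorm fun x => t x - b := hsum.sum_le_tsum _ fun _ _ => norm_nonneg _

end IsTrigPoly

/-- The trigonometric polynomial `Re Σ_{‖k‖_∞ ≤ d} μ_k f̂(k) exp(2πi⟨k, x⟩)`, i.e. the Fourier
multiplier with symbol `μ` applied to a trigonometric polynomial `f` of degree `≤ d`. The real part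
makes it real-valued without assuming that `μ` is even. -/
noncomputable def fourierMultiplier {m : ℕ} (μ : (Fin m → ℤ) → ℝ) (d : ℕ) (f : (Fin m → ℝ) → ℝ)
    (x : Fin m → ℝ) : ℝ :=
  (∑ k ∈ freqBox m d, μ k * fCoeff f k * trigChar k x).re

theorem abs_fourierMultiplier_sub_le {m d : ℕ} {f : (Fin m → ℝ) → ℝ} (hf : IsTrigPoly d f)
    {μ : (Fin m → ℤ) → ℝ} {δ : ℝ} (hμ0 : μ 0 = 1) (hμ : ∀ k ∈ freqBox m d, |μ k - 1| ≤ δ)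
    (b : ℝ) (x : Fin m → ℝ) :
    |fourierMultiplier μ d f x - f x| ≤ Fnorm (fun z => f z - b) * δ := by
  have hδ : 0 ≤ δ := (abs_nonneg _).trans (hμ 0 (zero_mem_freqBox m d))
  have hdiff : fourierMultiplier μ d f x - f x =
      (∑ k ∈ (freqBox m d).erase 0, ((μ k - 1 : ℝ) : ℂ) * fCoeff f k * trigChar k x).re := by
    rw [Finset.sum_erase _ (by simp [hμ0]), fourierMultiplier, ← Complex.ofReal_re (f x),
      hf.eq_sum_fCoeff, ← Complex.sub_re, ← Finset.sum_sub_distrib]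
    simp only [Complex.ofReal_sub, Complex.ofReal_one, sub_mul, one_mul]
  calc |fourierMultiplier μ d f x - f x|
      ≤ ∑ k ∈ (freqBox m d).erase 0, ‖((μ k - 1 : ℝ) : ℂ) * fCoeff f k * trigChar k x‖ := by
        rw [hdiff]
        exact (Complex.abs_re_le_norm _).trans (norm_sum_le _ _)
    _ ≤ ∑ k ∈ (freqBox m d).erase 0, ‖fCoeff f k‖ * δ := by
        refine Finset.sum_le_sum fun k hk => ?_
        rw [norm_mul, norm_mul, norm_trigChar, mul_one, Complex.norm_real, Real.norm_eq_abs,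
          mul_comm]
        gcongr
        exact hμ k (Finset.mem_of_mem_erase hk)
    _ ≤ Fnorm (fun z => f z - b) * δ := by
        rw [← Finset.sum_mul]
        gcongr
        exact hf.sum_norm_fCoeff_le_Fnorm b

theorem exists_eq_sum_sq_of_eq_sum_mul_sq {m s : ℕ} {J : Type*} [Fintype J]
    {q : J → (Fin m → ℝ) → ℝ} (hq : ∀ j, IsTrigPoly s (q j)) {v : J → ℝ} (hv : ∀ j, 0 ≤ v j)
    {f : (Fin m → ℝ) → ℝ} (hf : ∀ x, f x = ∑ j, v j * q j x ^ 2) :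
    ∃ (K : ℕ) (h : Fin K → (Fin m → ℝ) → ℝ),
      (∀ k, IsTrigPoly s (h k)) ∧ ∀ x, f x = ∑ k, h k x ^ 2 := by
  let e := (Fintype.equivFin J).symm
  refine ⟨Fintype.card J, fun k x => √(v (e k)) * q (e k) x, fun k => (hq _).const_mul _,
    fun x => ?_⟩
  simp only [hf, mul_pow, Real.sq_sqrt (hv _)]
  exact (e.sum_comp fun j => v j * q j x ^ 2).symm

/-- The positive operator `f ↦ Σ_j f(y_j) q_j(x)²` has every character of degree `≤ d` as an
eigenfunction, with eigenvalue `lam k` at frequency `k`. Such an operator turns nonnegativity at the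
nodes `y_j` into a sum-of-squares representation. -/
def IsSquareKernel {n : ℕ} {J : Type*} [Fintype J] (d : ℕ) (y : J → Fin n → ℝ)
    (q : J → (Fin n → ℝ) → ℝ) (lam : (Fin n → ℤ) → ℝ) : Prop :=
  ∀ k ∈ freqBox n d, ∀ x,
    ∑ j, trigChar k (y j) * (q j x : ℂ) ^ 2 = lam k * trigChar k x

namespace IsSquareKernel

variable {n d s : ℕ} {J : Type*} [Fintype J] {y : J → Fin n → ℝ} {q : J → (Fin n → ℝ) → ℝ}
  {lam : (Fin n → ℤ) → ℝ} {g : (Fin n → ℝ) → ℝ}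

theorem sum_sq (hker : IsSquareKernel d y q lam) (x : Fin n → ℝ) :
    ∑ j, q j x ^ 2 = lam 0 := by
  have h := hker 0 (zero_mem_freqBox n d) x
  simp only [trigChar_zero, one_mul, mul_one] at h
  exact_mod_cast h

theorem sum_fourierMultiplier_mul_sq (hker : IsSquareKernel d y q lam)
    (hlam : ∀ k ∈ freqBox n d, lam k ≠ 0) (hg : IsTrigPoly d g) (x : Fin n → ℝ) :
    ∑ j, fourierMultiplier (fun k => lam 0 / lam k) d g (y j) * q j x ^ 2 = lam 0 * g x := by
  have hre (j : J) : fourierMultiplier (fun k => lam 0 / lam k) d g (y j) * q j x ^ 2 =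
      (∑ k ∈ freqBox n d,
        ((lam 0 / lam k : ℝ) * fCoeff g k) * (trigChar k (y j) * (q j x : ℂ) ^ 2)).re := by
    rw [fourierMultiplier, ← Complex.re_mul_ofReal, Finset.sum_mul, Complex.ofReal_pow]
    simp only [mul_assoc]
  simp only [hre]
  rw [← Complex.re_sum, ← Complex.ofReal_re (lam 0 * g x), Complex.ofReal_mul, hg.eq_sum_fCoeff,
    Finset.sum_comm, Finset.mul_sum]
  congr 1
  refine Finset.sum_congr rfl fun k hk => ?_
  have hk0 : (lam k : ℂ) ≠ 0 := Complex.ofReal_ne_zero.2 (hlam k hk)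
  rw [← Finset.mul_sum, hker k hk, Complex.ofReal_div]
  field_simp

theorem exists_sos (hker : IsSquareKernel d y q lam) (hy : ∀ j, y j ∈ Set.Icc 0 1)
    (hq : ∀ j, IsTrigPoly s (q j)) (hlam : ∀ k ∈ freqBox n d, lam k ≠ 0) {δ : ℝ}
    (hδ : ∀ k ∈ freqBox n d, |lam 0 / lam k - 1| ≤ δ) (hg : IsTrigPoly d g) (b : ℝ) :
    ∃ (c : ℝ) (K : ℕ) (h : Fin K → (Fin n → ℝ) → ℝ),
      (∀ k, IsTrigPoly s (h k)) ∧
      (∀ x, g x - c = ∑ k, (h k x) ^ 2) ∧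
      sInf (g '' Set.Icc (0 : Fin n → ℝ) 1) - c ≤ Fnorm (fun x => g x - b) * δ := by
  have hlam0 : lam 0 ≠ 0 := hlam 0 (zero_mem_freqBox n d)
  have hlam0_nonneg : 0 ≤ lam 0 :=
    (Finset.sum_nonneg fun j _ => sq_nonneg (q j 0)).trans_eq (hker.sum_sq 0)
  set u := fourierMultiplier (fun k => lam 0 / lam k) d g
  set c := sInf (g '' Set.Icc (0 : Fin n → ℝ) 1) - Fnorm (fun x => g x - b) * δ
  have hu_nonneg (j : J) : 0 ≤ (u (y j) - c) / lam 0 := by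
    have hmin : sInf (g '' Set.Icc (0 : Fin n → ℝ) 1) ≤ g (y j) :=
      csInf_le (isCompact_Icc.bddBelow_image hg.continuous.continuousOn)
        (Set.mem_image_of_mem g (hy j))
    have hclose : |u (y j) - g (y j)| ≤ Fnorm (fun x => g x - b) * δ :=
      abs_fourierMultiplier_sub_le hg (div_self hlam0) hδ b (y j)
    exact div_nonneg (by linarith [neg_le_of_abs_le hclose]) hlam0_nonneg
  have hg_sub (x : Fin n → ℝ) : g x - c = ∑ j, (u (y j) - c) / lam 0 * q j x ^ 2 := by
    simp only [div_mul_eq_mul_div, sub_mul]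
    rw [← Finset.sum_div, Finset.sum_sub_distrib, ← Finset.mul_sum, hker.sum_sq,
      hker.sum_fourierMultiplier_mul_sq hlam hg]
    field_simp
  obtain ⟨K, h, hh, hsum⟩ := exists_eq_sum_sq_of_eq_sum_mul_sq hq hu_nonneg hg_sub
  exact ⟨c, K, h, hh, hsum, by linarith⟩

end IsSquareKernel

/-- The autocorrelation `Σ_a w_a w_{a+k}` of a sequence of weights. It is meant for `w ∈ ℓ²`, where
the series converges. -/
noncomputable def autocorr (w : ℤ → ℝ) (k : ℤ) : ℝ := ∑' a, w a * w (a + k)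

section Autocorrelation

variable {w : ℤ → ℝ}

theorem hasSum_autocorr (hw : Summable fun a => w a ^ 2) (k : ℤ) :
    HasSum (fun a => w a * w (a + k)) (autocorr w k) := by
  have hshift : Summable fun a => w (a + k) ^ 2 := hw.comp_injective (add_left_injective k)
  refine (Summable.of_norm_bounded (hw.add hshift) fun a => ?_).hasSum
  rw [Real.norm_eq_abs, abs_le]
  constructor <;> nlinarith [sq_nonneg (w a + w (a + k)), sq_nonneg (w a - w (a + k))]

theorem hasSum_sq_sub (hw : Summable fun a => w a ^ 2) (k : ℤ) :
    HasSum (fun a => (w (a + k) - w a) ^ 2) (2 * (autocorr w 0 - autocorr w k)) := by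
  have hzero : HasSum (fun a => w a ^ 2) (autocorr w 0) := by
    simpa [sq] using hasSum_autocorr hw 0
  have hshift : HasSum (fun a => w (a + k) ^ 2) (autocorr w 0) :=
    (Equiv.addRight k).hasSum_iff (f := fun a => w a ^ 2) |>.2 hzero
  convert! (hshift.add hzero).sub ((hasSum_autocorr hw k).mul_left 2) using 1
  · ext a
    ring
  · ring

theorem autocorr_neg (w : ℤ → ℝ) (k : ℤ) : autocorr w (-k) = autocorr w k := by
  rw [autocorr, ← (Equiv.addRight k).tsum_eq]
  simp [autocorr, mul_comm]

theorem autocorr_le_autocorr_zero (hw : Summable fun a => w a ^ 2) (k : ℤ) :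
    autocorr w k ≤ autocorr w 0 := by
  have h := (hasSum_sq_sub hw k).nonneg fun a => sq_nonneg _
  linarith

-- A shift by `k` is `k` unit shifts, so Cauchy–Schwarz bounds its squared `ℓ²`-increment by `k²`
-- times that of a unit shift.
theorem autocorr_zero_sub_natCast_le (hw : Summable fun a => w a ^ 2) (k : ℕ) :
    autocorr w 0 - autocorr w k ≤ k ^ 2 * (autocorr w 0 - autocorr w 1) := by
  have htelescope (a : ℤ) :
      w (a + k) - w a = ∑ j ∈ Finset.range k, (w (a + j + 1) - w (a + j)) := by
    have h := Finset.sum_range_sub (fun j : ℕ => w (a + j)) k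
    simp only [Nat.cast_add, Nat.cast_one, ← add_assoc, Nat.cast_zero, add_zero] at h
    exact h.symm
  have hunit (j : ℕ) : HasSum (fun a : ℤ => (w (a + j + 1) - w (a + j)) ^ 2)
      (2 * (autocorr w 0 - autocorr w 1)) :=
    (Equiv.addRight (j : ℤ)).hasSum_iff (f := fun a => (w (a + 1) - w a) ^ 2) |>.2
      (hasSum_sq_sub hw 1)
  have hcauchy (a : ℤ) : (w (a + k) - w a) ^ 2 ≤
      k * ∑ j ∈ Finset.range k, (w (a + j + 1) - w (a + j)) ^ 2 := by
    rw [htelescope a]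
    exact sq_sum_le_card_mul_sum_sq.trans_eq (by rw [Finset.card_range])
  have hle := hasSum_le hcauchy (hasSum_sq_sub hw k)
    ((hasSum_sum fun j _ => hunit j).mul_left (k : ℝ))
  simp only [Finset.sum_const, Finset.card_range, nsmul_eq_mul] at hle
  linarith

theorem autocorr_zero_sub_le (hw : Summable fun a => w a ^ 2) (k : ℤ) :
    autocorr w 0 - autocorr w k ≤ k ^ 2 * (autocorr w 0 - autocorr w 1) := by
  obtain ⟨l, rfl | rfl⟩ := k.eq_nat_or_neg
  · exact_mod_cast autocorr_zero_sub_natCast_le hw l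
  · rw [autocorr_neg, Int.cast_neg, neg_sq]
    exact_mod_cast autocorr_zero_sub_natCast_le hw l

end Autocorrelation

theorem sum_primitiveRoot_zpow_pow {F : Type*} [Field F] {N : ℕ} {ζ : F}
    (hζ : IsPrimitiveRoot ζ N) (k : ℤ) :
    ∑ j : Fin N, (ζ ^ k) ^ (j : ℕ) = if (N : ℤ) ∣ k then (N : F) else 0 := by
  split_ifs with hk
  · simp [(hζ.zpow_eq_one_iff_dvd k).2 hk]
  · have hone : ζ ^ k ≠ 1 := fun h => hk ((hζ.zpow_eq_one_iff_dvd k).1 h)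
    have hpow : (ζ ^ k) ^ N = 1 := by
      rw [← zpow_natCast, zpow_comm, zpow_natCast, hζ.pow_eq_one, one_zpow]
    rw [Fin.sum_univ_eq_sum_range fun j => (ζ ^ k) ^ j, geom_sum_eq hone, hpow, sub_self, zero_div]

/-- The points of the uniform grid of mesh `1 / N` in the unit cube, used as interpolation nodes. -/
noncomputable def gridPoint {n N : ℕ} (j : Fin n → Fin N) : Fin n → ℝ :=
  fun i => (j i : ℝ) / N

theorem gridPoint_mem_Icc {n N : ℕ} (j : Fin n → Fin N) : gridPoint j ∈ Set.Icc 0 1 :=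
  ⟨fun _ => div_nonneg (Nat.cast_nonneg _) (Nat.cast_nonneg _),
    fun i => div_le_one_of_le₀ (Nat.cast_le.2 (j i).is_lt.le) (Nat.cast_nonneg _)⟩

theorem trigChar_gridPoint {n N : ℕ} (k : Fin n → ℤ) (j : Fin n → Fin N) :
    trigChar k (gridPoint j) =
      ∏ i, (Complex.exp (2 * Real.pi * Complex.I / N) ^ k i) ^ (j i : ℕ) := by
  simp only [trigChar, gridPoint, Finset.mul_sum, Complex.exp_sum, ← Complex.exp_int_mul,
    ← Complex.exp_nat_mul]
  refine Finset.prod_congr rfl fun i _ => congrArg Complex.exp ?_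
  push_cast
  ring

theorem sum_trigChar_gridPoint {n N : ℕ} (hN : N ≠ 0) (k : Fin n → ℤ) :
    ∑ j : Fin n → Fin N, trigChar k (gridPoint j) =
      if ∀ i, (N : ℤ) ∣ k i then (N : ℂ) ^ n else 0 := by
  simp only [trigChar_gridPoint]
  rw [← Fintype.piFinset_univ, ← Finset.prod_univ_sum (fun _ => Finset.univ) fun i (j : Fin N) =>
    (Complex.exp (2 * Real.pi * Complex.I / N) ^ k i) ^ (j : ℕ)]
  simp only [sum_primitiveRoot_zpow_pow (Complex.isPrimitiveRoot_exp N hN), Finset.prod_ite_zero,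
    Finset.mem_univ, true_implies, Finset.prod_const, Finset.card_univ, Fintype.card_fin]

theorem sum_trigChar_gridPoint_of_lt {n N : ℕ} {k : Fin n → ℤ} (hk : ∀ i, |k i| < N)
    (hN : N ≠ 0) :
    ∑ j : Fin n → Fin N, trigChar k (gridPoint j) = if k = 0 then (N : ℂ) ^ n else 0 := by
  have hdvd : (∀ i, (N : ℤ) ∣ k i) ↔ k = 0 :=
    ⟨fun h => funext fun i => Int.eq_zero_of_abs_lt_dvd (h i) (hk i), fun h => by simp [h]⟩
  simp only [sum_trigChar_gridPoint hN, hdvd]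

/-- The trigonometric polynomial of degree `≤ s` with Fourier coefficients `w`; it is a real-valued
function with these coefficients only for even `w`, hence the real part. -/
noncomputable def trigKernel {n : ℕ} (s : ℕ) (w : (Fin n → ℤ) → ℝ) (z : Fin n → ℝ) : ℝ :=
  (∑ a ∈ freqBox n s, w a * trigChar a z).re

section TrigKernel

variable {n s : ℕ} {w : (Fin n → ℤ) → ℝ}

theorem ofReal_trigKernel (hw : ∀ a, w (-a) = w a) (z : Fin n → ℝ) :
    (trigKernel s w z : ℂ) = ∑ a ∈ freqBox n s, w a * trigChar a z := by
  refine Complex.conj_eq_iff_re.1 ?_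
  simp only [map_sum, map_mul, Complex.conj_ofReal, ← trigChar_neg]
  exact Finset.sum_equiv (Equiv.neg _) (fun a => neg_mem_freqBox.symm) fun a _ => by
    rw [Equiv.neg_apply, hw]

theorem isTrigPoly_trigKernel (hw : ∀ a, w (-a) = w a) : IsTrigPoly s (trigKernel s w) :=
  ⟨freqBox n s, fun a => w a, fun _ => mem_freqBox.1, ofReal_trigKernel hw⟩

theorem trigChar_mul_trigKernel_sub_sq (hw : ∀ a, w (-a) = w a) (k : Fin n → ℤ)
    (x y : Fin n → ℝ) :
    trigChar k y * (trigKernel s w (x - y) : ℂ) ^ 2 =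
      ∑ a ∈ freqBox n s, ∑ b ∈ freqBox n s,
        (w a * w b * trigChar (a + b) x) * trigChar (k + -a + -b) y := by
  rw [ofReal_trigKernel hw, sq, Finset.sum_mul_sum, Finset.mul_sum]
  refine Finset.sum_congr rfl fun a _ => ?_
  rw [Finset.mul_sum]
  refine Finset.sum_congr rfl fun b _ => ?_
  simp only [trigChar_sub_right, trigChar_add]
  ring

-- Aliasing modulo `N` is excluded: all the frequencies that occur are `≤ d + 2s < N`.
theorem sum_trigChar_mul_trigKernel_sq (hw : ∀ a, w (-a) = w a)
    (hsupp : ∀ a ∉ freqBox n s, w a = 0) {d N : ℕ} (hN : d + 2 * s < N) {k : Fin n → ℤ}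
    (hk : k ∈ freqBox n d) (x : Fin n → ℝ) :
    ∑ j : Fin n → Fin N, trigChar k (gridPoint j) * (trigKernel s w (x - gridPoint j) : ℂ) ^ 2 =
      N ^ n * (∑ a ∈ freqBox n s, w a * w (k - a) : ℝ) * trigChar k x := by
  have horth {a b : Fin n → ℤ} (ha : a ∈ freqBox n s) (hb : b ∈ freqBox n s) :
      ∑ j : Fin n → Fin N, trigChar (k + -a + -b) (gridPoint j) =
        if b = k - a then (N : ℂ) ^ n else 0 := by
    have hlt (i : Fin n) : |(k + -a + -b) i| < N := by
      have hki := mem_freqBox.1 hk i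
      have hai := mem_freqBox.1 ha i
      have hbi := mem_freqBox.1 hb i
      simp only [Pi.add_apply, Pi.neg_apply]
      grind
    rw [sum_trigChar_gridPoint_of_lt hlt (by lia)]
    simp only [← sub_eq_add_neg, sub_eq_zero, eq_comm]
  simp only [trigChar_mul_trigKernel_sub_sq hw]
  rw [Finset.sum_comm, Complex.ofReal_sum, Finset.mul_sum, Finset.sum_mul]
  refine Finset.sum_congr rfl fun a ha => ?_
  rw [Finset.sum_comm]
  calc ∑ b ∈ freqBox n s, ∑ j : Fin n → Fin N,
        (w a * w b * trigChar (a + b) x) * trigChar (k + -a + -b) (gridPoint j)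
      = ∑ b ∈ freqBox n s,
          if b = k - a then w a * w b * trigChar (a + b) x * (N : ℂ) ^ n else 0 := by
        refine Finset.sum_congr rfl fun b hb => ?_
        rw [← Finset.mul_sum, horth ha hb, mul_ite, mul_zero]
    _ = N ^ n * (w a * w (k - a) : ℝ) * trigChar k x := by
        rw [Finset.sum_ite_eq', add_sub_cancel, Complex.ofReal_mul]
        split_ifs with hka
        · ring
        · simp [hsupp _ hka]

end TrigKernel

section ProductWeights

variable {v : ℤ → ℝ} {s : ℕ}

theorem autocorr_eq_sum (heven : ∀ a, v (-a) = v a)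
    (hsupp : ∀ a : ℤ, (s : ℤ) < |a| → v a = 0) (k : ℤ) :
    autocorr v k = ∑ a ∈ Finset.Icc (-(s : ℤ)) s, v a * v (k - a) := by
  rw [← autocorr_neg, autocorr, tsum_eq_sum (s := Finset.Icc (-(s : ℤ)) s) fun a ha => by
    rw [hsupp a (by grind), zero_mul]]
  refine Finset.sum_congr rfl fun a _ => ?_
  rw [← heven (k - a), neg_sub, sub_eq_add_neg]

theorem sum_prod_mul_prod_sub (heven : ∀ a, v (-a) = v a)
    (hsupp : ∀ a : ℤ, (s : ℤ) < |a| → v a = 0) {n : ℕ} (k : Fin n → ℤ) :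
    ∑ a ∈ freqBox n s, (∏ i, v (a i)) * ∏ i, v ((k - a) i) = ∏ i, autocorr v (k i) := by
  simp only [autocorr_eq_sum heven hsupp, Finset.prod_univ_sum, Finset.prod_mul_distrib, freqBox,
    Pi.sub_apply]

theorem isSquareKernel_trigKernel_prod (heven : ∀ a, v (-a) = v a)
    (hsupp : ∀ a : ℤ, (s : ℤ) < |a| → v a = 0) {n d N : ℕ} (hN : d + 2 * s < N) :
    IsSquareKernel d (gridPoint : (Fin n → Fin N) → Fin n → ℝ)
      (fun j x => trigKernel s (fun a => ∏ i, v (a i)) (x - gridPoint j))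
      fun k => N ^ n * ∏ i, autocorr v (k i) := by
  intro k hk x
  have hbox (a : Fin n → ℤ) (ha : a ∉ freqBox n s) : ∏ i, v (a i) = 0 := by
    obtain ⟨i, hi⟩ : ∃ i, (s : ℤ) < |a i| := by simpa [mem_freqBox] using ha
    exact Finset.prod_eq_zero (Finset.mem_univ i) (hsupp _ hi)
  rw [sum_trigChar_mul_trigKernel_sq (by simp [heven]) hbox hN hk,
    sum_prod_mul_prod_sub heven hsupp]
  push_cast
  rfl

end ProductWeights

theorem abs_prod_sub_one_le {ι : Type*} [Fintype ι] {c : ι → ℝ} {C : ℝ} (hc1 : ∀ i, 1 ≤ c i)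
    (hcC : ∀ i, c i ≤ C) : |∏ i, c i - 1| ≤ C ^ Fintype.card ι - 1 := by
  have hlow : 1 ≤ ∏ i, c i := Finset.one_le_prod fun i _ => hc1 i
  have hup : ∏ i, c i ≤ C ^ Fintype.card ι := by
    simpa using Finset.prod_le_prod (s := Finset.univ) (fun i _ => zero_le_one.trans (hc1 i))
      fun i _ => hcC i
  rw [abs_of_nonneg (sub_nonneg.2 hlow)]
  gcongr

theorem sum_range_const_sub_sq (c : ℝ) (m : ℕ) :
    ∑ a ∈ Finset.range m, (c - a) ^ 2 =
      m * c ^ 2 - c * m * (m - 1) + m * (m - 1) * (2 * m - 1) / 6 := by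
  induction m with
  | zero => simp
  | succ m ih =>
    rw [Finset.sum_range_succ, ih]
    push_cast
    ring

/-- The triangular weights `max(s - |a|, 0)`, the discrete tent function on `[-s, s]`. -/
def tent (s : ℕ) (a : ℤ) : ℝ := max ((s : ℝ) - |(a : ℝ)|) 0

section Tent

variable {s : ℕ}

theorem tent_neg (a : ℤ) : tent s (-a) = tent s a := by
  simp [tent]

theorem tent_eq_zero {a : ℤ} (ha : (s : ℤ) ≤ |a|) : tent s a = 0 :=
  max_eq_right (sub_nonpos.2 (by exact_mod_cast ha))

theorem abs_tent_sub_le (a b : ℤ) : |tent s a - tent s b| ≤ |(a : ℝ) - b| :=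
  calc |tent s a - tent s b|
      ≤ |(s - |(a : ℝ)|) - (s - |(b : ℝ)|)| := abs_max_sub_max_le_abs _ _ _
    _ = |(|(a : ℝ)| - |(b : ℝ)|)| := by rw [sub_sub_sub_cancel_left, abs_sub_comm]
    _ ≤ |(a : ℝ) - b| := abs_abs_sub_abs_le _ _

theorem summable_sq_tent (s : ℕ) : Summable fun a => tent s a ^ 2 :=
  summable_of_ne_finset_zero (s := Finset.Icc (-(s : ℤ)) s) fun a ha => by
    rw [tent_eq_zero (by grind), zero_pow two_ne_zero]

theorem autocorr_tent_zero (s : ℕ) : autocorr (tent s) 0 = (2 * (s : ℝ) ^ 3 + s) / 3 := by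
  have hval (a : ℕ) (ha : a ∈ Finset.range (s + 1)) :
      tent s a * tent s (0 - a) = ((s : ℝ) - a) ^ 2 := by
    have has : (a : ℝ) ≤ s := by exact_mod_cast Finset.mem_range_succ_iff.1 ha
    rw [zero_sub, tent_neg, tent, Int.cast_natCast, Nat.abs_cast, max_eq_left (sub_nonneg.2 has),
      sq]
  have hzero : tent s 0 * tent s (0 - 0) = (s : ℝ) ^ 2 := by simpa using hval 0 (by simp)
  rw [autocorr_eq_sum tent_neg (fun _ ha => tent_eq_zero ha.le),
    Finset.sum_Icc_of_even_eq_range (fun a => by simp [tent_neg]), Finset.sum_congr rfl hval,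
    sum_range_const_sub_sq, hzero, nsmul_eq_mul]
  push_cast
  ring

theorem autocorr_tent_zero_pos (hs : s ≠ 0) : 0 < autocorr (tent s) 0 := by
  rw [autocorr_tent_zero]
  positivity

theorem autocorr_tent_zero_sub_one_le (s : ℕ) :
    autocorr (tent s) 0 - autocorr (tent s) 1 ≤ s := by
  have hincr (a : ℤ) :
      (tent s (a + 1) - tent s a) ^ 2 ≤ if a ∈ Finset.Ico (-(s : ℤ)) s then (1 : ℝ) else 0 := by
    split_ifs with ha
    · have hle : |tent s (a + 1) - tent s a| ≤ 1 := by
        simpa using abs_tent_sub_le (s := s) (a + 1) a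
      exact (sq_le_one_iff_abs_le_one _).2 hle
    · rw [Finset.mem_Ico] at ha
      rw [tent_eq_zero (by grind), tent_eq_zero (by grind), sub_self, zero_pow two_ne_zero]
  have hcard : ((Finset.Ico (-(s : ℤ)) s).card : ℝ) = 2 * s := by
    rw [Int.card_Ico, sub_neg_eq_add, ← two_mul]
    exact_mod_cast Int.toNat_natCast (2 * s)
  have hsum : HasSum (fun a => if a ∈ Finset.Ico (-(s : ℤ)) s then (1 : ℝ) else 0) (2 * s) := by
    have h := hasSum_sum_of_ne_finset_zero (L := .unconditional ℤ)
      (f := fun a => if a ∈ Finset.Ico (-(s : ℤ)) s then (1 : ℝ) else 0) fun a ha => if_neg ha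
    rwa [Finset.sum_ite_mem, Finset.inter_self, Finset.sum_const, nsmul_one, hcard] at h
  have hle := hasSum_le hincr (hasSum_sq_sub (summable_sq_tent s) 1) hsum
  linarith

theorem one_sub_mul_autocorr_tent_zero_le (hs : s ≠ 0) {d : ℕ} {k : ℤ} (hk : |k| ≤ d) :
    (1 - 3 * (d : ℝ) ^ 2 / (2 * (s : ℝ) ^ 2)) * autocorr (tent s) 0 ≤ autocorr (tent s) k := by
  have hk2 : (k : ℝ) ^ 2 ≤ (d : ℝ) ^ 2 := by
    rw [sq_le_sq, Nat.abs_cast]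
    exact_mod_cast hk
  have hdrop : autocorr (tent s) 0 - autocorr (tent s) k ≤ d ^ 2 * s :=
    (autocorr_zero_sub_le (summable_sq_tent s) k).trans <|
      mul_le_mul hk2 (autocorr_tent_zero_sub_one_le s)
        (sub_nonneg.2 (autocorr_le_autocorr_zero (summable_sq_tent s) 1)) (sq_nonneg _)
  have hscale : (d : ℝ) ^ 2 * s ≤ 3 * d ^ 2 / (2 * s ^ 2) * autocorr (tent s) 0 := by
    rw [autocorr_tent_zero, div_mul_eq_mul_div, le_div_iff₀ (by positivity)]
    nlinarith [show 0 ≤ (d : ℝ) ^ 2 * s by positivity]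
  linarith

theorem one_sub_three_mul_sq_div_pos {d : ℕ} (hs : 3 * d ^ 2 < 2 * s ^ 2) :
    0 < 1 - 3 * (d : ℝ) ^ 2 / (2 * (s : ℝ) ^ 2) := by
  have hs' : 3 * (d : ℝ) ^ 2 < 2 * (s : ℝ) ^ 2 := by exact_mod_cast hs
  rwa [sub_pos, div_lt_one (lt_of_le_of_lt (by positivity) hs')]

theorem autocorr_tent_pos {d : ℕ} (hs : 3 * d ^ 2 < 2 * s ^ 2) {k : ℤ} (hk : |k| ≤ d) :
    0 < autocorr (tent s) k := by
  have hs0 : s ≠ 0 := fun h => by simp [h] at hs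
  exact (mul_pos (one_sub_three_mul_sq_div_pos hs) (autocorr_tent_zero_pos hs0)).trans_le
    (one_sub_mul_autocorr_tent_zero_le hs0 hk)

theorem abs_prod_autocorr_tent_div_sub_one_le {n d : ℕ} (hs : 3 * d ^ 2 < 2 * s ^ 2)
    {k : Fin n → ℤ} (hk : k ∈ freqBox n d) :
    |∏ i, autocorr (tent s) 0 / autocorr (tent s) (k i) - 1| ≤
      (1 - 3 * (d : ℝ) ^ 2 / (2 * (s : ℝ) ^ 2)) ^ (-(n : ℤ)) - 1 := by
  have hs0 : s ≠ 0 := fun h => by simp [h] at hs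
  have hpos (i : Fin n) : 0 < autocorr (tent s) (k i) := autocorr_tent_pos hs (mem_freqBox.1 hk i)
  rw [zpow_neg, zpow_natCast, ← inv_pow]
  simpa only [Fintype.card_fin] using abs_prod_sub_one_le
    (fun i => (one_le_div (hpos i)).2 (autocorr_le_autocorr_zero (summable_sq_tent s) _))
    fun i => by
      rw [div_le_iff₀ (hpos i), ← div_eq_inv_mul, le_div_iff₀' (one_sub_three_mul_sq_div_pos hs)]
      exact one_sub_mul_autocorr_tent_zero_le hs0 (mem_freqBox.1 hk i)

end Tent

theorem sos_lower_bound_gap_general (n d : ℕ) (g : (Fin n → ℝ) → ℝ) (hg : IsTrigPoly d g)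
    (s : ℕ) (hs : 3 * d ^ 2 < 2 * s ^ 2) :
    ∃ (c : ℝ) (K : ℕ) (h : Fin K → (Fin n → ℝ) → ℝ),
      (∀ k, IsTrigPoly s (h k)) ∧
      (∀ x, g x - c = ∑ k, (h k x) ^ 2) ∧
      sInf (g '' Set.Icc (0 : Fin n → ℝ) 1) - c ≤
        Fnorm (fun x => g x - ∫ y in Set.Icc (0 : Fin n → ℝ) 1, g y) *
          ((1 - 3 * (d : ℝ) ^ 2 / (2 * (s : ℝ) ^ 2)) ^ (-(n : ℤ)) - 1) := by
  have hker := isSquareKernel_trigKernel_prod (n := n) tent_neg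
    (fun _ ha => tent_eq_zero ha.le) (Nat.lt_succ_self (d + 2 * s))
  refine hker.exists_sos gridPoint_mem_Icc
    (fun j => (isTrigPoly_trigKernel (by simp [tent_neg])).comp_sub_right _)
    (fun k hk => ?_) (fun k hk => ?_) hg _
  · have hprod : 0 < ∏ i, autocorr (tent s) (k i) :=
      Finset.prod_pos fun i _ => autocorr_tent_pos hs (mem_freqBox.1 hk i)
    positivity
  · rw [mul_div_mul_left _ _ (by positivity), ← Finset.prod_div_distrib]
    exact abs_prod_autocorr_tent_div_sub_one_le hs hk

/-- quantitative SOS lower bound for a single trigonometric polynomial.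
Let `g : ℝⁿ → ℝ` be a real trigonometric polynomial of degree `≤ 2r`. For every integer `s`
with `s² > 6r²` there exist `c ∈ ℝ` and trigonometric polynomials `h₁, …, h_K` of degree
`≤ s` with `g(x) − c = Σ_k h_k(x)²` for all `x` and
`(min_{x ∈ [0,1]ⁿ} g(x)) − c ≤ ‖g − ḡ‖_F · [(1 − 6r²/s²)^{−n} − 1]`, where
`ḡ = ∫_{[0,1]^n} g`. -/
theorem sos_lower_bound_gap (n r : ℕ)
    (g : (Fin n → ℝ) → ℝ) (hg : IsTrigPoly (2 * r) g)
    (s : ℕ) (hs : 6 * r ^ 2 < s ^ 2) :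
    ∃ (c : ℝ) (K : ℕ) (h : Fin K → (Fin n → ℝ) → ℝ),
      (∀ k, IsTrigPoly s (h k)) ∧
      (∀ x, g x - c = ∑ k, (h k x) ^ 2) ∧
      sInf (g '' Set.Icc (0 : Fin n → ℝ) 1) - c ≤
        Fnorm (fun x => g x - ∫ y in Set.Icc (0 : Fin n → ℝ) 1, g y) *
          ((1 - 6 * (r : ℝ) ^ 2 / (s : ℝ) ^ 2) ^ (-(n : ℤ)) - 1) := by
  have hρ : 3 * ((2 * r : ℕ) : ℝ) ^ 2 / (2 * (s : ℝ) ^ 2) = 6 * (r : ℝ) ^ 2 / (s : ℝ) ^ 2 := by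
    push_cast
    ring
  simpa only [hρ] using sos_lower_bound_gap_general n (2 * r) g hg s (by linarith)
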